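/- Let s = (s_1,…,s_n) be a sequence of positive integers and let r = max{ asc(e) : e ∈ I_n^(s) }. Then the s-lecture hall polytope P_n^(s) is level if and only if for every k with 1 ≤ k < r and every e ∈ I_{n,k}^(s), there exists e' ∈ I_{n,1}^(s) such that e + e' ∈ I_{n,k+1}^(s). -/

import Mathlib

open scoped BigOperators

noncomputable section

/-- The `s`-lecture hall polytope
`P_n^(s) = { x ∈ ℝ^n : 0 ≤ x_1/s_1 ≤ x_2/s_2 ≤ ⋯ ≤ x_n/s_n ≤ 1 }` (indices 0-based in Lean). -/
def lhp (n : ℕ) (s : Fin n → ℤ) : Set (Fin n → ℝ) :=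
  {x | (∀ i : Fin n, (i : ℕ) = 0 → 0 ≤ x i / (s i : ℝ)) ∧
       (∀ i j : Fin n, (j : ℕ) = (i : ℕ) + 1 → x i / (s i : ℝ) ≤ x j / (s j : ℝ)) ∧
       (∀ i : Fin n, (i : ℕ) = n - 1 → x i / (s i : ℝ) ≤ 1)}

/-- The vertex `(0,…,0,s_i,s_{i+1},…,s_n)` of the lecture hall polytope (real version). -/
def lhpVertexR (n : ℕ) (s : Fin n → ℤ) (i : Fin n) : Fin n → ℝ :=
  fun j => if i ≤ j then (s j : ℝ) else 0

/-- The vertex `(0,…,0,s_i,s_{i+1},…,s_n)` of the lecture hall polytope (integer version). -/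
def lhpVertexZ (n : ℕ) (s : Fin n → ℤ) (i : Fin n) : Fin n → ℤ :=
  fun j => if i ≤ j then s j else 0

/-- `cone(P_n^(s)) = span_{ℝ≥0} { (v,1) : v a vertex of P_n^(s) } ⊆ ℝ^{n+1}`:
the set of nonnegative combinations of `(0,1)` and the `(v_i,1)`. -/
def lhpCone (n : ℕ) (s : Fin n → ℤ) : Set (Fin (n + 1) → ℝ) :=
  {x | ∃ (a : ℝ) (b : Fin n → ℝ), 0 ≤ a ∧ (∀ i, 0 ≤ b i) ∧
      x = a • (Fin.snoc (0 : Fin n → ℝ) 1 : Fin (n + 1) → ℝ) +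
        ∑ i : Fin n, b i • (Fin.snoc (lhpVertexR n s i) 1 : Fin (n + 1) → ℝ)}

/-- Lattice points of `cone(P_n^(s))`. -/
def lhpConeZ (n : ℕ) (s : Fin n → ℤ) : Set (Fin (n + 1) → ℤ) :=
  {x | (fun i => (x i : ℝ)) ∈ lhpCone n s}

/-- Lattice points of the (relative) interior of `cone(P_n^(s))`
(the cone is full-dimensional, so the relative interior is the interior). -/
def lhpConeInteriorZ (n : ℕ) (s : Fin n → ℤ) : Set (Fin (n + 1) → ℤ) :=
  {x | (fun i => (x i : ℝ)) ∈ interior (lhpCone n s)}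

/-- `P_n^(s)` is Gorenstein: some integer point `c` satisfies
`c + (cone(P) ∩ ℤ^{n+1}) = cone(P)° ∩ ℤ^{n+1}`. -/
def IsGorenstein (n : ℕ) (s : Fin n → ℤ) : Prop :=
  ∃ c : Fin (n + 1) → ℤ,
    (fun x => c + x) '' lhpConeZ n s = lhpConeInteriorZ n s

/-- `P_n^(s)` is level: finitely many integer points `c_1,…,c_m`, all with the same
last coordinate, satisfy `⋃ (c_i + (cone(P) ∩ ℤ^{n+1})) = cone(P)° ∩ ℤ^{n+1}`. -/
def IsLevel (n : ℕ) (s : Fin n → ℤ) : Prop :=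
  ∃ C : Finset (Fin (n + 1) → ℤ), C.Nonempty ∧
    (∀ c ∈ C, ∀ c' ∈ C, c (Fin.last n) = c' (Fin.last n)) ∧
    (⋃ c ∈ C, (fun x => c + x) '' lhpConeZ n s) = lhpConeInteriorZ n s

/-- The `t`-lecture hall cone `C_m^(t) = { x ∈ ℝ^m : 0 ≤ x_1/t_1 ≤ ⋯ ≤ x_m/t_m }`. -/
def lhCone (m : ℕ) (t : Fin m → ℤ) : Set (Fin m → ℝ) :=
  {x | (∀ i : Fin m, (i : ℕ) = 0 → 0 ≤ x i / (t i : ℝ)) ∧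
       (∀ i j : Fin m, (j : ℕ) = (i : ℕ) + 1 → x i / (t i : ℝ) ≤ x j / (t j : ℝ))}

/-- `e` is an `s`-inversion sequence: `0 ≤ e_i < s_i` for all `i`. -/
def IsInvSeq (n : ℕ) (s : Fin n → ℤ) (e : Fin n → ℤ) : Prop :=
  ∀ i, 0 ≤ e i ∧ e i < s i

/-- The ratio `e_i / s_i` as a rational number. -/
def invRatio (n : ℕ) (s e : Fin n → ℤ) (i : Fin n) : ℚ := (e i : ℚ) / (s i : ℚ)

/-- The ratio `e_{i-1}/s_{i-1}`, with the convention `e_0 = 0`, `s_0 = 1`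
(paper 1-based indexing; here 0-based). -/
def prevRatio (n : ℕ) (s e : Fin n → ℤ) (i : Fin n) : ℚ :=
  if (i : ℕ) = 0 then 0
  else invRatio n s e ⟨(i : ℕ) - 1, lt_of_le_of_lt (Nat.sub_le _ _) i.isLt⟩

/-- The ascent set `Asc(e) ⊆ {0,…,n-1}` of an inversion sequence. -/
def ascSet (n : ℕ) (s e : Fin n → ℤ) : Finset (Fin n) :=
  Finset.univ.filter fun i => prevRatio n s e i < invRatio n s e i

/-- The number of ascents of an inversion sequence. -/
def asc (n : ℕ) (s e : Fin n → ℤ) : ℕ := (ascSet n s e).card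

/-- Addition of inversion sequences: componentwise mod `s_i`,
with representative in `{0,…,s_i - 1}`. -/
def invAdd (n : ℕ) (s : Fin n → ℤ) (e e' : Fin n → ℤ) : Fin n → ℤ :=
  fun i => (e i + e' i) % s i

/-- `hStar n s k = # I_{n,k}^(s)`, the number of `s`-inversion sequences with `k` ascents
(the `k`-th coefficient of the `s`-Eulerian polynomial). -/
def hStar (n : ℕ) (s : Fin n → ℤ) (k : ℕ) : ℕ :=
  Nat.card {e : Fin n → ℤ // IsInvSeq n s e ∧ asc n s e = k}

/-- `s` is `u`-generated by a sequence `u` of positive integers: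
`s_2 = u_1 s_1 - 1` and `s_{i+1} = u_i s_i - s_{i-1}` for `i > 1`. -/
def IsUGenerated (n : ℕ) (s : Fin n → ℤ) : Prop :=
  ∃ u : Fin n → ℤ,
    (∀ i : Fin n, (i : ℕ) < n - 1 → 0 < u i) ∧
    (∀ k j : Fin n, (j : ℕ) = (k : ℕ) + 1 → (k : ℕ) = 0 → s j = u k * s k - 1) ∧
    (∀ a k j : Fin n, (k : ℕ) = (a : ℕ) + 1 → (j : ℕ) = (k : ℕ) + 1 →
      s j = u k * s k - s a)

/-- The (half-open) fundamental parallelepiped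
`Π = { Σ η_i (v_i,1) : 0 ≤ η_i < 1 }` of `P_n^(s)`. -/
def fpp (n : ℕ) (s : Fin n → ℤ) : Set (Fin (n + 1) → ℝ) :=
  {x | ∃ (a : ℝ) (b : Fin n → ℝ),
      (0 ≤ a ∧ a < 1) ∧ (∀ i, 0 ≤ b i ∧ b i < 1) ∧
      x = a • (Fin.snoc (0 : Fin n → ℝ) 1 : Fin (n + 1) → ℝ) +
        ∑ i : Fin n, b i • (Fin.snoc (lhpVertexR n s i) 1 : Fin (n + 1) → ℝ)}

/-- The lattice point `λ(e) ∈ ℤ^{n+1}` associated to an inversion sequence `e`: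
`λ(e)_j = ℓ_j s_j - e_j` with `ℓ_j = #(Asc(e) ∩ {0,…,j-1})` (paper 1-based `j`),
and last coordinate `asc(e)`. -/
def lamOf (n : ℕ) (s : Fin n → ℤ) (e : Fin n → ℤ) : Fin (n + 1) → ℤ :=
  Fin.snoc
    (fun j : Fin n =>
      (((ascSet n s e).filter fun i : Fin n => (i : ℕ) ≤ (j : ℕ)).card : ℤ) * s j - e j)
    (asc n s e : ℤ)

/-- A coefficient sequence `h` (of a polynomial `Σ h_j z^j` of degree `r`) is palindromic:
`h_r ≠ 0`, `h_k = 0` for `k > r`, and `h_j = h_{r-j}` for `0 ≤ j ≤ r`. -/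
def IsPalindromic (h : ℕ → ℕ) : Prop :=
  ∃ r : ℕ, h r ≠ 0 ∧ (∀ k, r < k → h k = 0) ∧ ∀ j, j ≤ r → h j = h (r - j)

end


namespace LHP

/-- Ratios `x_j / s_j`, shifted by one, with `R 0 = 0` and `s_{n+1} = 1`. -/
noncomputable def R (n : ℕ) (s : Fin n → ℤ) (x : Fin (n + 1) → ℝ) : ℕ → ℝ
  | 0 => 0
  | m + 1 => if h : m < n + 1 then x ⟨m, h⟩ / (if h' : m < n then (s ⟨m, h'⟩ : ℝ) else 1) else 0

noncomputable def gap (n : ℕ) (s : Fin n → ℤ) (x : Fin (n + 1) → ℝ) (m : ℕ) : ℝ :=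
  R n s x (m + 1) - R n s x m

def rl {n : ℕ} (x : Fin (n + 1) → ℤ) : Fin (n + 1) → ℝ := fun i => (x i : ℝ)

/-- integer gap -/
noncomputable def gz (n : ℕ) (s : Fin n → ℤ) (x : Fin (n + 1) → ℤ) (m : ℕ) : ℝ := gap n s (rl x) m

variable {n : ℕ} {s : Fin n → ℤ}

lemma R_zero (x : Fin (n + 1) → ℝ) : R n s x 0 = 0 := rfl

lemma R_succ (x : Fin (n + 1) → ℝ) (i : Fin n) :
    R n s x (i + 1) = x i.castSucc / (s i : ℝ) := by
  have h1 : (i : ℕ) < n + 1 := by omega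
  have h2 : (i : ℕ) < n := i.isLt
  simp only [R, h1, h2, dif_pos]
  rfl

lemma R_last (x : Fin (n + 1) → ℝ) : R n s x (n + 1) = x (Fin.last n) := by
  have h1 : n < n + 1 := by omega
  simp only [R, h1, dif_pos, lt_irrefl, dif_neg, not_false_eq_true, div_one]
  rfl

lemma R_add (x y : Fin (n + 1) → ℝ) (m : ℕ) : R n s (x + y) m = R n s x m + R n s y m := by
  cases m with
  | zero => simp [R]
  | succ m =>
    simp only [R, Pi.add_apply]
    by_cases h : m < n + 1
    · simp only [h, dif_pos, add_div]
    · simp [h]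

lemma R_smul (a : ℝ) (x : Fin (n + 1) → ℝ) (m : ℕ) : R n s (a • x) m = a * R n s x m := by
  cases m with
  | zero => simp [R]
  | succ m =>
    simp only [R, Pi.smul_apply, smul_eq_mul]
    by_cases h : m < n + 1
    · simp only [h, dif_pos, mul_div_assoc]
    · simp [h]

lemma gap_add (x y : Fin (n + 1) → ℝ) (m : ℕ) :
    gap n s (x + y) m = gap n s x m + gap n s y m := by
  simp only [gap, R_add]; ring

lemma gap_smul (a : ℝ) (x : Fin (n + 1) → ℝ) (m : ℕ) :
    gap n s (a • x) m = a * gap n s x m := by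
  simp only [gap, R_smul]; ring

lemma gz_add (x y : Fin (n + 1) → ℤ) (m : ℕ) :
    gz n s (x + y) m = gz n s x m + gz n s y m := by
  rw [gz, gz, gz, ← gap_add]; congr 1; ext i; simp [rl]

lemma gz_neg (x : Fin (n + 1) → ℤ) (m : ℕ) :
    gz n s (-x) m = - gz n s x m := by
  have := gap_smul (s := s) (-1) (rl x) m
  rw [gz, gz, ← neg_one_mul (gap n s (rl x) m), ← this]; congr 1; ext i; simp [rl]

lemma gz_sub (x y : Fin (n + 1) → ℤ) (m : ℕ) :
    gz n s (x - y) m = gz n s x m - gz n s y m := by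
  rw [sub_eq_add_neg, gz_add, gz_neg, ← sub_eq_add_neg]

lemma R_eq_sum (x : Fin (n + 1) → ℝ) (m : ℕ) :
    R n s x m = ∑ j ∈ Finset.range m, gap n s x j := by
  simp only [gap]
  rw [Finset.sum_range_sub, R_zero, sub_zero]

lemma deg_eq_sum (x : Fin (n + 1) → ℝ) :
    x (Fin.last n) = ∑ j ∈ Finset.range (n + 1), gap n s x j := by
  rw [← R_eq_sum, R_last]

lemma ext_gap (hs : ∀ i, 0 < s i) {x y : Fin (n + 1) → ℝ}
    (h : ∀ m < n + 1, gap n s x m = gap n s y m) : x = y := by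
  have hR : ∀ m ≤ n + 1, R n s x m = R n s y m := by
    intro m hm
    rw [R_eq_sum, R_eq_sum]
    refine Finset.sum_congr rfl fun j hj => h j ?_
    have := Finset.mem_range.1 hj; omega
  ext i
  refine Fin.lastCases ?_ (fun i => ?_) i
  · rw [← R_last (s := s) x, ← R_last (s := s) y]; exact hR _ le_rfl
  · have h1 := hR (i + 1) (by omega)
    rw [R_succ, R_succ] at h1
    have : (0 : ℝ) < s i := by exact_mod_cast hs i
    field_simp at h1
    exact h1

/-- point with prescribed gaps -/
noncomputable def mk (n : ℕ) (s : Fin n → ℤ) (g : ℕ → ℝ) : Fin (n + 1) → ℝ :=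
  Fin.snoc (fun i : Fin n => (s i : ℝ) * ∑ j ∈ Finset.range (i + 1), g j)
    (∑ j ∈ Finset.range (n + 1), g j)

lemma R_mk (hs : ∀ i, 0 < s i) (g : ℕ → ℝ) (m : ℕ) (hm : m ≤ n + 1) :
    R n s (mk n s g) m = ∑ j ∈ Finset.range m, g j := by
  rcases m with _ | m
  · simp [R]
  · rcases Nat.lt_or_ge m n with h | h
    · have := R_succ (s := s) (mk n s g) ⟨m, h⟩
      simp only at this
      rw [this]
      have h0 : (0 : ℝ) < s ⟨m, h⟩ := by exact_mod_cast hs _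
      simp only [mk, Fin.snoc_castSucc]
      field_simp
    · have : m = n := by omega
      subst this
      rw [R_last]; simp [mk]

lemma gap_mk (hs : ∀ i, 0 < s i) (g : ℕ → ℝ) (m : ℕ) (hm : m < n + 1) :
    gap n s (mk n s g) m = g m := by
  rw [gap, R_mk hs g _ (by omega), R_mk hs g _ (by omega), Finset.sum_range_succ]; ring

lemma comb_eq_mk (g : ℕ → ℝ) :
    g n • (Fin.snoc (0 : Fin n → ℝ) 1 : Fin (n + 1) → ℝ) +
        ∑ i : Fin n, g i • (Fin.snoc (lhpVertexR n s i) 1 : Fin (n + 1) → ℝ) = mk n s g := by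
  ext k
  refine Fin.lastCases ?_ (fun k => ?_) k
  · simp only [Pi.add_apply, Pi.smul_apply, Finset.sum_apply, Fin.snoc_last, mk, smul_eq_mul, mul_one]
    rw [Finset.sum_range_succ, Finset.sum_range, add_comm]
  · simp only [Pi.add_apply, Pi.smul_apply, Finset.sum_apply, Fin.snoc_castSucc, mk, smul_eq_mul,
      lhpVertexR, Pi.zero_apply, mul_zero, zero_add, mul_ite]
    rw [← Finset.sum_filter, ← Finset.sum_mul, mul_comm]
    congr 1
    refine Finset.sum_bij (fun i _ => (i : ℕ)) ?_ ?_ ?_ ?_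
    · intro a ha
      simp only [Finset.mem_filter, Finset.mem_univ, true_and, Fin.le_def] at ha
      simp; omega
    · intro a _ b _ h; exact Fin.ext h
    · intro b hb
      simp only [Finset.mem_range] at hb
      exact ⟨⟨b, by omega⟩, Finset.mem_filter.2 ⟨Finset.mem_univ _,
        Fin.le_def.2 (Nat.lt_succ_iff.1 hb)⟩, rfl⟩
    · intro _ _; rfl

lemma mem_cone (hs : ∀ i, 0 < s i) (x : Fin (n + 1) → ℝ) :
    x ∈ lhpCone n s ↔ ∀ m < n + 1, 0 ≤ gap n s x m := by
  constructor
  · rintro ⟨a, b, ha, hb, rfl⟩ m hm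
    let g : ℕ → ℝ := fun m => if h : m < n then b ⟨m, h⟩ else a
    have h1 : g n = a := by simp [g]
    have h2 : ∀ i : Fin n, g i = b i := by intro i; simp [g]
    have h3 := comb_eq_mk (n := n) (s := s) g
    simp only [h1, h2] at h3
    rw [h3, gap_mk hs g m hm]
    simp only [g]
    split_ifs
    · exact hb _
    · exact ha
  · intro h
    refine ⟨gap n s x n, fun i => gap n s x i, h n (by omega), fun i => h i (by omega), ?_⟩
    rw [comb_eq_mk]
    exact ext_gap hs fun m hm => (gap_mk hs _ m hm).symm

lemma continuous_R (m : ℕ) : Continuous fun x => R n s x m := by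
  cases m with
  | zero => simp only [R]; exact continuous_const
  | succ m =>
    simp only [R]
    by_cases h : m < n + 1
    · simp only [h, dif_pos]
      exact (continuous_apply _).div_const _
    · simp only [h, dif_neg, not_false_eq_true]; exact continuous_const

lemma mem_interior (hs : ∀ i, 0 < s i) (x : Fin (n + 1) → ℝ) :
    x ∈ interior (lhpCone n s) ↔ ∀ m < n + 1, 0 < gap n s x m := by
  constructor
  · intro hx m hm
    let u := mk n s (fun _ => 1)
    have hc : Continuous fun t : ℝ => x + t • u := by fun_prop
    have h0 : x + (0 : ℝ) • u ∈ interior (lhpCone n s) := by simpa using hx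
    have hev := (hc.tendsto 0).eventually (isOpen_interior.mem_nhds h0)
    obtain ⟨ε, hε, hb⟩ := Metric.eventually_nhds_iff.1 hev
    have h1 := hb (y := -(ε / 2)) (by
      rw [Real.dist_eq, sub_zero, abs_neg, abs_of_pos (by positivity)]; linarith)
    have h2 := (mem_cone hs _).1 (interior_subset h1) m hm
    rw [gap_add, gap_smul, gap_mk hs _ m hm] at h2
    linarith
  · intro h
    have hop : IsOpen {x | ∀ m < n + 1, 0 < gap n s x m} := by
      have : {x | ∀ m < n + 1, 0 < gap n s x m}
          = ⋂ m ∈ Finset.range (n + 1), {x | 0 < gap n s x m} := by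
        ext; simp
      rw [this]
      refine isOpen_biInter_finset fun m _ => ?_
      exact isOpen_lt continuous_const ((continuous_R _).sub (continuous_R _))
    exact interior_maximal (fun y hy => (mem_cone hs y).2 fun m hm => (hy m hm).le) hop h

lemma mem_coneZ (hs : ∀ i, 0 < s i) (x : Fin (n + 1) → ℤ) :
    x ∈ lhpConeZ n s ↔ ∀ m < n + 1, 0 ≤ gz n s x m := mem_cone hs _

lemma mem_intZ (hs : ∀ i, 0 < s i) (x : Fin (n + 1) → ℤ) :
    x ∈ lhpConeInteriorZ n s ↔ ∀ m < n + 1, 0 < gz n s x m := mem_interior hs _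

/-- The integer point with all gaps equal to one. -/
def U (n : ℕ) (s : Fin n → ℤ) : Fin (n + 1) → ℤ :=
  Fin.snoc (fun i : Fin n => s i * ((i : ℤ) + 1)) ((n : ℤ) + 1)

lemma gz_U (hs : ∀ i, 0 < s i) (m : ℕ) (hm : m < n + 1) : gz n s (U n s) m = 1 := by
  rw [gz, ← gap_mk hs (fun _ => 1) m hm]
  congr 1
  ext k
  refine Fin.lastCases ?_ (fun k => ?_) k
  · simp [rl, U, mk]
  · simp [rl, U, mk]

def Pi' (n : ℕ) (s : Fin n → ℤ) (x : Fin (n + 1) → ℤ) : Prop :=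
  ∀ m < n + 1, 0 ≤ gz n s x m ∧ gz n s x m < 1

def toE (n : ℕ) (s : Fin n → ℤ) (x : Fin (n + 1) → ℤ) : Fin n → ℤ :=
  fun i => (-x i.castSucc) % s i

lemma toE_inv (hs : ∀ i, 0 < s i) (x : Fin (n + 1) → ℤ) : IsInvSeq n s (toE n s x) := fun i =>
  ⟨Int.emod_nonneg _ (hs i).ne', Int.emod_lt_of_pos _ (hs i)⟩

lemma toE_add (x y : Fin (n + 1) → ℤ) :
    toE n s (x + y) = invAdd n s (toE n s x) (toE n s y) := by
  ext i
  simp only [toE, invAdd, Pi.add_apply, neg_add, Int.emod_add_emod, Int.add_emod_emod]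

lemma degZ_eq_sum (x : Fin (n + 1) → ℤ) :
    ((x (Fin.last n) : ℤ) : ℝ) = ∑ j ∈ Finset.range (n + 1), gz n s x j :=
  deg_eq_sum (s := s) (rl x)

lemma extZ (hs : ∀ i, 0 < s i) {x y : Fin (n + 1) → ℤ}
    (h : ∀ m < n + 1, gz n s x m = gz n s y m) : x = y := by
  have := ext_gap hs (x := rl x) (y := rl y) h
  ext i
  have h1 := congrFun this i
  simp only [rl] at h1
  exact_mod_cast h1

lemma gap_int (hs : ∀ i, 0 < s i) (x : Fin (n + 1) → ℤ) (h : ∀ i : Fin n, s i ∣ x i.castSucc)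
    (m : ℕ) (hm : m < n + 1) : ∃ z : ℤ, gz n s x m = z := by
  have hR : ∀ m ≤ n + 1, ∃ z : ℤ, R n s (rl x) m = z := by
    intro m hm
    rcases m with _ | m
    · exact ⟨0, by simp [R]⟩
    · rcases Nat.lt_or_ge m n with h' | h'
      · have := R_succ (s := s) (rl x) ⟨m, h'⟩
        simp only at this
        rw [this]
        obtain ⟨z, hz⟩ := h ⟨m, h'⟩
        have h0 : (0 : ℝ) < s ⟨m, h'⟩ := by exact_mod_cast hs _
        refine ⟨z, ?_⟩
        simp only [rl, hz]
        push_cast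
        field_simp
      · have : m = n := by omega
        subst this
        exact ⟨_, R_last (rl x)⟩
  obtain ⟨a, ha⟩ := hR (m + 1) (by omega)
  obtain ⟨b, hb⟩ := hR m (by omega)
  exact ⟨a - b, by rw [gz, gap, ha, hb]; push_cast; ring⟩

lemma dvd_of_toE {x y : Fin (n + 1) → ℤ} (h : toE n s x = toE n s y) (i : Fin n) :
    s i ∣ (x - y) i.castSucc := by
  have h1 := congrFun h i
  simp only [toE] at h1
  have h2 := Int.ModEq.dvd (a := -x i.castSucc) (b := -y i.castSucc) (n := s i) h1
  have h3 : -y i.castSucc - -x i.castSucc = (x - y) i.castSucc := by simp; ring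
  rwa [h3] at h2

/-- An inversion sequence as a point of height zero. -/
def bar (n : ℕ) (e : Fin n → ℤ) : Fin (n + 1) → ℤ := Fin.snoc e 0

lemma R_bar {e : Fin n → ℤ} (he : IsInvSeq n s e) (m : ℕ) (hm : m ≤ n + 1) :
    0 ≤ R n s (rl (bar n e)) m ∧ R n s (rl (bar n e)) m < 1 := by
  rcases m with _ | m
  · simp [R]
  · rcases Nat.lt_or_ge m n with h' | h'
    · have := R_succ (s := s) (rl (bar n e)) ⟨m, h'⟩
      simp only at this
      rw [this]
      obtain ⟨h1, h2⟩ := he ⟨m, h'⟩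
      have h3 : (0 : ℝ) ≤ e ⟨m, h'⟩ := by exact_mod_cast h1
      have h4 : (e ⟨m, h'⟩ : ℝ) < s ⟨m, h'⟩ := by exact_mod_cast h2
      simp only [rl, bar, Fin.snoc_castSucc]
      exact ⟨div_nonneg h3 (h3.trans h4.le), (div_lt_one (h3.trans_lt h4)).2 h4⟩
    · have : m = n := by omega
      subst this
      rw [R_last]; simp [rl, bar]

lemma gz_bar_last {e : Fin n → ℤ} (he : IsInvSeq n s e) :
    gz n s (bar n e) n ≤ 0 := by
  have h := (R_bar he n (by omega)).1
  rw [gz, gap, R_last]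
  simp only [rl, bar, Fin.snoc_last] at h ⊢
  push_cast
  linarith

lemma gz_bar_bound {e : Fin n → ℤ} (he : IsInvSeq n s e) (m : ℕ) (hm : m < n + 1) :
    -1 < gz n s (bar n e) m ∧ gz n s (bar n e) m < 1 := by
  have h := R_bar he m (by omega)
  have h' := R_bar he (m + 1) (by omega)
  rw [gz, gap]
  constructor <;> linarith [h.1, h.2, h'.1, h'.2]

lemma mem_asc (e : Fin n → ℤ) (i : Fin n) :
    i ∈ ascSet n s e ↔ 0 < gz n s (bar n e) i := by
  have h1 : ((invRatio n s e i : ℚ) : ℝ) = R n s (rl (bar n e)) (i + 1) := by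
    rw [R_succ]; simp [invRatio, rl, bar]
  have h2 : ((prevRatio n s e i : ℚ) : ℝ) = R n s (rl (bar n e)) i := by
    obtain ⟨i, hi⟩ := i
    rcases i with _ | i
    · simp [prevRatio, R]
    · have := R_succ (s := s) (rl (bar n e)) ⟨i, by omega⟩
      simp only at this
      simp only [this]
      simp only [rl, bar, Fin.snoc_castSucc]
      simp [prevRatio, invRatio]
  rw [gz, gap, sub_pos, ← h1, ← h2]
  simp [ascSet]

lemma asc_eq (hs : ∀ i, 0 < s i) {e : Fin n → ℤ} (he : IsInvSeq n s e) {x : Fin (n + 1) → ℤ}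
    (hx : Pi' n s x) (h : ∀ i, s i ∣ e i + x i.castSucc) :
    (asc n s e : ℤ) = x (Fin.last n) := by
  have hint : ∀ m < n + 1, ∃ z : ℤ, gz n s (bar n e + x) m = z :=
    gap_int hs _ (fun i => by simpa [bar] using h i)
  have hsum := degZ_eq_sum (s := s) (bar n e + x)
  have hl : (bar n e + x) (Fin.last n) = x (Fin.last n) := by simp [bar]
  rw [hl, Finset.sum_range_succ, Finset.sum_range] at hsum
  have hlast : gz n s (bar n e + x) n = 0 := by
    obtain ⟨z, hz⟩ := hint n (by omega)
    have e1 := gz_add (s := s) (bar n e) x n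
    have e2 := gz_bar_bound he n (by omega)
    have e3 := gz_bar_last he
    have e4 := hx n (by omega)
    rw [hz] at e1 ⊢
    have z1 : (-1 : ℝ) < z := by linarith [e2.1, e4.1]
    have z2 : (z : ℝ) < 1 := by linarith [e4.2]
    have z1' : -1 < z := by exact_mod_cast z1
    have z2' : z < 1 := by exact_mod_cast z2
    have : z = 0 := by omega
    simp [this]
  have hterm : ∀ i : Fin n, gz n s (bar n e + x) i = if i ∈ ascSet n s e then 1 else 0 := by
    intro i
    obtain ⟨z, hz⟩ := hint i (by omega)
    have e1 := gz_add (s := s) (bar n e) x i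
    have e2 := gz_bar_bound he i (by omega)
    have e4 := hx i (by omega)
    rw [hz] at e1 ⊢
    split_ifs with hi
    · rw [mem_asc] at hi
      have z1 : (0 : ℝ) < z := by linarith [e2.1, e4.1]
      have z2 : (z : ℝ) < 2 := by linarith [e4.2]
      have z1' : 0 < z := by exact_mod_cast z1
      have z2' : z < 2 := by exact_mod_cast z2
      have : z = 1 := by omega
      simp [this]
    · rw [mem_asc, not_lt] at hi
      have z1 : (-1 : ℝ) < z := by linarith [e2.1, e4.1]
      have z2 : (z : ℝ) < 1 := by linarith [e4.2]
      have z1' : -1 < z := by exact_mod_cast z1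
      have z2' : z < 1 := by exact_mod_cast z2
      have : z = 0 := by omega
      simp [this]
  rw [hlast] at hsum
  simp only [hterm] at hsum
  rw [Finset.sum_ite_mem, Finset.univ_inter] at hsum
  simp only [Finset.sum_const, nsmul_eq_mul, mul_one, add_zero] at hsum
  rw [asc]
  exact_mod_cast hsum.symm

lemma asc_toE (hs : ∀ i, 0 < s i) {x : Fin (n + 1) → ℤ} (hx : Pi' n s x) :
    (asc n s (toE n s x) : ℤ) = x (Fin.last n) := by
  refine asc_eq hs (toE_inv hs x) hx fun i => ?_
  have := Int.dvd_sub_self_of_emod_eq (a := -x i.castSucc) (b := s i) (c := toE n s x i) rfl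
  have h3 : toE n s x i + x i.castSucc = toE n s x i - -x i.castSucc := by ring
  rw [h3]
  exact this

lemma exists_pt (hs : ∀ i, 0 < s i) {e : Fin n → ℤ} (he : IsInvSeq n s e) :
    ∃ x, Pi' n s x ∧ toE n s x = e := by
  classical
  let g : ℕ → ℤ := fun m => if 0 < gz n s (bar n e) m then 1 else 0
  let w : Fin (n + 1) → ℤ :=
    Fin.snoc (fun i : Fin n => s i * ∑ j ∈ Finset.range (i + 1), g j)
      (∑ j ∈ Finset.range (n + 1), g j)
  have hw : ∀ m < n + 1, gz n s w m = g m := by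
    intro m hm
    rw [gz, ← gap_mk hs (fun j => (g j : ℝ)) m hm]
    congr 1
    ext k
    refine Fin.lastCases ?_ (fun k => ?_) k
    · simp [rl, w, mk]
    · simp [rl, w, mk]
  refine ⟨w - bar n e, fun m hm => ?_, ?_⟩
  · have hb := gz_bar_bound he m hm
    rw [gz_sub, hw m hm]
    simp only [g]
    split_ifs with h0
    · push_cast; constructor <;> linarith [hb.1, hb.2]
    · push_cast; constructor <;> linarith [hb.1, hb.2]
  · ext i
    have : -(w - bar n e) i.castSucc = e i + s i * (- ∑ j ∈ Finset.range (i + 1), g j) := by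
      simp [w, bar]; ring
    rw [toE, this, Int.add_mul_emod_self_left]
    exact Int.emod_eq_of_lt (he i).1 (he i).2

lemma toE_inj (hs : ∀ i, 0 < s i) {x y : Fin (n + 1) → ℤ} (hx : Pi' n s x) (hy : Pi' n s y)
    (h : toE n s x = toE n s y) : x = y := by
  refine extZ hs fun m hm => ?_
  obtain ⟨z, hz⟩ := gap_int hs (x - y) (dvd_of_toE h) m hm
  have h1 := hx m hm
  have h2 := hy m hm
  rw [gz_sub] at hz
  have z1 : (-1 : ℝ) < z := by linarith [h1.1, h2.2]
  have z2 : (z : ℝ) < 1 := by linarith [h1.2, h2.1]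
  have z1' : -1 < z := by exact_mod_cast z1
  have z2' : z < 1 := by exact_mod_cast z2
  have : z = 0 := by omega
  subst this
  push_cast at hz
  linarith

lemma finite_Pi (hs : ∀ i, 0 < s i) : {x | Pi' n s x}.Finite := by
  refine Set.Finite.of_finite_image (f := toE n s) ?_ ?_
  · refine (Set.finite_Icc (0 : Fin n → ℤ) s).subset ?_
    rintro _ ⟨x, _, rfl⟩
    have := toE_inv hs x
    exact ⟨fun i => (this i).1, fun i => (this i).2.le⟩
  · intro x hx y hy h
    exact toE_inj hs hx hy h

/-- If sums of parallelepiped points have additive ascent number, there is no carry. -/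
lemma add_mem (hs : ∀ i, 0 < s i) {x y : Fin (n + 1) → ℤ} (hx : Pi' n s x) (hy : Pi' n s y)
    (h : (asc n s (toE n s (x + y)) : ℤ) = (x + y) (Fin.last n)) : Pi' n s (x + y) := by
  obtain ⟨z, hz, hze⟩ := exists_pt hs (toE_inv hs (x + y))
  have hdeg : z (Fin.last n) = (x + y) (Fin.last n) := by
    rw [← h, ← hze, asc_toE hs hz]
  have hint := gap_int hs (x + y - z) (dvd_of_toE hze.symm)
  have hnn : ∀ m ∈ Finset.range (n + 1), 0 ≤ gz n s (x + y - z) m := by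
    intro m hm
    have hm := Finset.mem_range.1 hm
    obtain ⟨t, ht⟩ := hint m hm
    have e1 := gz_sub (s := s) (x + y) z m
    have e2 := gz_add (s := s) x y m
    have z1 : (-1 : ℝ) < t := by linarith [(hx m hm).1, (hy m hm).1, (hz m hm).2]
    have z1' : -1 < t := by exact_mod_cast z1
    rw [ht]
    exact_mod_cast (by omega : 0 ≤ t)
  have hsum := degZ_eq_sum (s := s) (x + y - z)
  have h0 : (x + y - z) (Fin.last n) = 0 := by
    rw [Pi.sub_apply, hdeg, sub_self]
  rw [h0, Int.cast_zero, eq_comm, Finset.sum_eq_zero_iff_of_nonneg hnn] at hsum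
  have : x + y = z := extZ hs fun m hm => by
    have := hsum m (Finset.mem_range.2 hm)
    rw [gz_sub] at this
    linarith
  rw [this]; exact hz

/-- The integer decomposition property, one step. -/
lemma idp (hs : ∀ i, 0 < s i) (v : Fin (n + 1) → ℤ) (hv : ∀ m < n + 1, 0 ≤ gz n s v m)
    (hd : 1 ≤ v (Fin.last n)) : ∃ μ : Fin (n + 1) → ℤ, μ (Fin.last n) = 1 ∧
      ∀ m < n + 1, 0 ≤ gz n s μ m ∧ gz n s μ m ≤ gz n s v m := by
  let μ : Fin (n + 1) → ℤ := Fin.snoc (fun i : Fin n => min (v i.castSucc) (s i)) (min (v (Fin.last n)) 1)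
  have hR : ∀ m ≤ n + 1, R n s (rl μ) m = min (R n s (rl v) m) 1 := by
    intro m hm
    rcases m with _ | m
    · simp [R]
    · rcases Nat.lt_or_ge m n with h' | h'
      · have h1 := R_succ (s := s) (rl v) ⟨m, h'⟩
        have h2 := R_succ (s := s) (rl μ) ⟨m, h'⟩
        simp only at h1 h2
        rw [h1, h2]
        have h0 : (0 : ℝ) < s ⟨m, h'⟩ := by exact_mod_cast hs _
        simp only [rl, μ, Fin.snoc_castSucc]
        push_cast
        rw [← min_div_div_right h0.le, div_self h0.ne']
      · have : m = n := by omega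
        subst this
        rw [R_last, R_last]; simp [rl, μ]
  refine ⟨μ, by simp [μ, hd], fun m hm => ?_⟩
  have hvm := hv m hm
  simp only [gz, gap] at hvm ⊢
  rw [hR m (by omega), hR (m + 1) (by omega)]
  rcases min_cases (R n s (rl v) m) 1 with ⟨a, b⟩ | ⟨a, b⟩ <;>
  rcases min_cases (R n s (rl v) (m + 1)) 1 with ⟨c, d⟩ | ⟨c, d⟩ <;>
  rw [a, c] <;> constructor <;> linarith

lemma deg_nonneg {x : Fin (n + 1) → ℤ} (hx : ∀ m < n + 1, 0 ≤ gz n s x m) :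
    0 ≤ x (Fin.last n) := by
  have h := degZ_eq_sum (s := s) x
  have : (0 : ℝ) ≤ x (Fin.last n) := by
    rw [h]; exact Finset.sum_nonneg fun m hm => hx m (Finset.mem_range.1 hm)
  exact_mod_cast this

lemma eq_zero_of_deg (hs : ∀ i, 0 < s i) {x : Fin (n + 1) → ℤ} (hx : ∀ m < n + 1, 0 ≤ gz n s x m)
    (hd : x (Fin.last n) = 0) : x = 0 := by
  have h := degZ_eq_sum (s := s) x
  rw [hd, Int.cast_zero, eq_comm, Finset.sum_eq_zero_iff_of_nonneg
    (fun m hm => hx m (Finset.mem_range.1 hm))] at h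
  refine extZ hs fun m hm => ?_
  rw [h m (Finset.mem_range.2 hm)]
  have := gz_sub (s := s) x x m
  rw [sub_self, sub_self] at this
  exact this.symm

lemma isLevel_iff (hs : ∀ i, 0 < s i) : IsLevel n s ↔
    ∃ C : Finset (Fin (n + 1) → ℤ), C.Nonempty ∧
    (∀ c ∈ C, ∀ c' ∈ C, c (Fin.last n) = c' (Fin.last n)) ∧
    ∀ p, (∃ c ∈ C, ∀ m < n + 1, 0 ≤ gz n s (p - c) m) ↔ ∀ m < n + 1, 0 < gz n s p m := by
  unfold IsLevel
  refine exists_congr fun C => and_congr_right fun _ => and_congr_right fun _ => ?_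
  rw [Set.ext_iff]
  refine forall_congr' fun p => ?_
  rw [mem_intZ hs]
  refine iff_congr ?_ Iff.rfl
  simp only [Set.mem_iUnion, Set.mem_image, exists_prop]
  refine exists_congr fun c => and_congr_right fun _ => ?_
  rw [← mem_coneZ hs]
  constructor
  · rintro ⟨x, hx, rfl⟩; simpa using hx
  · intro h; exact ⟨_, h, by simp⟩

theorem forward (hs : ∀ i, 0 < s i) (r : ℕ)
    (hr : IsGreatest {k : ℕ | ∃ e : Fin n → ℤ, IsInvSeq n s e ∧ asc n s e = k} r)
    (hL : IsLevel n s) (k : ℕ) (hk : k < r) (e : Fin n → ℤ) (he : IsInvSeq n s e)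
    (hek : asc n s e = k) : ∃ e' : Fin n → ℤ, IsInvSeq n s e' ∧ asc n s e' = 1 ∧
            IsInvSeq n s (invAdd n s e e') ∧ asc n s (invAdd n s e e') = k + 1 := by
  obtain ⟨C, -, hCd, hC⟩ := (isLevel_iff hs).1 hL
  obtain ⟨⟨em, hem, hemr⟩, hmax⟩ := hr
  have hle : ∀ x, Pi' n s x → x (Fin.last n) ≤ r := by
    intro x hx
    have := hmax ⟨toE n s x, toE_inv hs x, rfl⟩
    rw [← asc_toE hs hx]
    exact_mod_cast this
  have key : ∀ x, Pi' n s x → ∃ c ∈ C, (∀ m < n + 1, 0 ≤ gz n s (U n s - x - c) m) ∧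
      Pi' n s (U n s - c) := by
    intro x hx
    obtain ⟨c, hc, hv⟩ := (hC (U n s - x)).2 fun m hm => by
      rw [gz_sub, gz_U hs m hm]; linarith [(hx m hm).2]
    refine ⟨c, hc, hv, fun m hm => ?_⟩
    have h1 := hv m hm
    have h2 := (hC c).1 ⟨c, hc, fun m hm => by rw [gz_sub, sub_self]⟩ m hm
    have h3 := (hx m hm).1
    rw [gz_sub, gz_sub] at h1
    rw [gz_sub]
    rw [gz_U hs m hm] at h1 ⊢
    constructor <;> linarith
  obtain ⟨x, hx, rfl⟩ := exists_pt hs he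
  obtain ⟨xm, hxm, rfl⟩ := exists_pt hs hem
  obtain ⟨c, hc, hv, hy⟩ := key x hx
  obtain ⟨c', hc', hv', hy'⟩ := key xm hxm
  have hdx : x (Fin.last n) = k := by rw [← asc_toE hs hx, hek]
  have hdm : xm (Fin.last n) = r := by rw [← asc_toE hs hxm, hemr]
  have hcc := hCd c hc c' hc'
  have hd1 := hle _ hy'
  have hd2 := deg_nonneg hv'
  simp only [Pi.sub_apply] at hd1 hd2
  obtain ⟨μ, hμ1, hμ⟩ := idp hs _ hv (by simp only [Pi.sub_apply]; omega)
  have hμP : Pi' n s μ := fun m hm => by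
    have h1 := hμ m hm
    have h2 := hy m hm
    have h3 := hx m hm
    rw [gz_sub] at h2
    rw [gz_sub, gz_sub] at h1
    constructor <;> linarith [h1.1, h1.2, h2.2, h3.1]
  have hxP : Pi' n s (x + μ) := fun m hm => by
    have h1 := hμ m hm
    have h2 := hy m hm
    have h3 := hx m hm
    rw [gz_sub] at h2
    rw [gz_sub, gz_sub] at h1
    rw [gz_add]
    constructor <;> linarith [h1.1, h1.2, h2.2, h3.1]
  refine ⟨toE n s μ, toE_inv hs _, ?_, ?_⟩
  · have := asc_toE hs hμP
    omega
  · rw [← toE_add]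
    refine ⟨toE_inv hs _, ?_⟩
    have := asc_toE hs hxP
    rw [Pi.add_apply] at this
    omega

theorem backward (hs : ∀ i, 0 < s i) (r : ℕ)
    (hr : IsGreatest {k : ℕ | ∃ e : Fin n → ℤ, IsInvSeq n s e ∧ asc n s e = k} r)
    (H : ∀ k : ℕ, 1 ≤ k → k < r →
        ∀ e : Fin n → ℤ, IsInvSeq n s e → asc n s e = k →
          ∃ e' : Fin n → ℤ, IsInvSeq n s e' ∧ asc n s e' = 1 ∧
            IsInvSeq n s (invAdd n s e e') ∧ asc n s (invAdd n s e e') = k + 1) :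
    IsLevel n s := by
  classical
  obtain ⟨⟨em, hem, hemr⟩, hmax⟩ := hr
  have hle : ∀ x, Pi' n s x → x (Fin.last n) ≤ r := by
    intro x hx
    have := hmax ⟨toE n s x, toE_inv hs x, rfl⟩
    rw [← asc_toE hs hx]
    exact_mod_cast this
  obtain ⟨xm, hxm, rfl⟩ := exists_pt hs hem
  have hdm : xm (Fin.last n) = r := by rw [← asc_toE hs hxm, hemr]
  have ext : ∀ d : ℕ, ∀ z, Pi' n s z → z (Fin.last n) + d = r →
      ∃ w, (∀ m < n + 1, 0 ≤ gz n s w m) ∧ Pi' n s (z + w) ∧ (z + w) (Fin.last n) = r := by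
    intro d
    induction d with
    | zero =>
      intro z hz hd
      refine ⟨0, fun m hm => ?_, by simpa using hz, by simpa using hd⟩
      rw [← sub_self z, gz_sub, sub_self]
    | succ d ih =>
      intro z hz hd
      have hz0 := deg_nonneg (fun m hm => (hz m hm).1)
      rcases hz0.eq_or_lt with h0 | h0
      · have := eq_zero_of_deg hs (fun m hm => (hz m hm).1) h0.symm
        subst this
        exact ⟨xm, fun m hm => (hxm m hm).1, by simpa using hxm, by simpa using hdm⟩
      · have ha := asc_toE hs hz
        obtain ⟨e', he', h1, -, h2⟩ := H (asc n s (toE n s z)) (by omega) (by omega) _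
          (toE_inv hs z) rfl
        obtain ⟨y, hy, rfl⟩ := exists_pt hs he'
        have hay := asc_toE hs hy
        rw [← toE_add] at h2
        have hzy := add_mem hs hz hy (by rw [Pi.add_apply]; omega)
        obtain ⟨w, hw, hP, hwd⟩ := ih (z + y) hzy (by rw [Pi.add_apply]; push_cast at hd; omega)
        refine ⟨y + w, fun m hm => ?_, by rwa [← add_assoc], by rwa [← add_assoc]⟩
        rw [gz_add]
        exact add_nonneg (hy m hm).1 (hw m hm)
  rw [isLevel_iff hs]
  have hfin : {x | Pi' n s x ∧ x (Fin.last n) = r}.Finite :=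
    (finite_Pi hs).subset fun x hx => hx.1
  refine ⟨hfin.toFinset.image fun z => U n s - z, ?_, ?_, ?_⟩
  · exact ⟨U n s - xm, Finset.mem_image.2 ⟨xm, by simpa using ⟨hxm, hdm⟩, rfl⟩⟩
  · intro c hc c' hc'
    simp only [Finset.mem_image, Set.Finite.mem_toFinset, Set.mem_ofPred_eq] at hc hc'
    obtain ⟨z, ⟨-, hz⟩, rfl⟩ := hc
    obtain ⟨z', ⟨-, hz'⟩, rfl⟩ := hc'
    simp only [Pi.sub_apply, hz, hz']
  · intro p
    constructor
    · rintro ⟨c, hc, h⟩ m hm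
      simp only [Finset.mem_image, Set.Finite.mem_toFinset, Set.mem_ofPred_eq] at hc
      obtain ⟨z, ⟨hz, -⟩, rfl⟩ := hc
      have h1 := h m hm
      rw [gz_sub, gz_sub, gz_U hs m hm] at h1
      linarith [(hz m hm).2]
    · intro hp
      obtain ⟨z, hz, hze⟩ := exists_pt hs (toE_inv hs (-p))
      have hzr := hle z hz
      obtain ⟨w, hw, hP, hd⟩ := ext (r - z (Fin.last n)).toNat z hz (by omega)
      refine ⟨U n s - (z + w), Finset.mem_image.2 ⟨z + w, by simpa using ⟨hP, hd⟩, rfl⟩,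
        fun m hm => ?_⟩
      obtain ⟨t, ht⟩ := gap_int hs (z - -p) (dvd_of_toE hze) m hm
      rw [gz_sub, gz_neg] at ht
      rw [gz_sub, gz_sub, gz_add, gz_U hs m hm]
      have h1 := hp m hm
      have h2 := hz m hm
      have z1 : (0 : ℝ) < t := by linarith [h2.1]
      have z1' : 0 < t := by exact_mod_cast z1
      have z2 : (1 : ℝ) ≤ t := by exact_mod_cast z1'
      linarith [hw m hm]

end LHP

theorem lhp_level_iff (n : ℕ) (s : Fin n → ℤ) (hs : ∀ i, 0 < s i) (r : ℕ)
    (hr : IsGreatest {k : ℕ | ∃ e : Fin n → ℤ, IsInvSeq n s e ∧ asc n s e = k} r) :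
    IsLevel n s ↔
      (∀ k : ℕ, 1 ≤ k → k < r →
        ∀ e : Fin n → ℤ, IsInvSeq n s e → asc n s e = k →
          ∃ e' : Fin n → ℤ, IsInvSeq n s e' ∧ asc n s e' = 1 ∧
            IsInvSeq n s (invAdd n s e e') ∧ asc n s (invAdd n s e e') = k + 1) := by
  exact ⟨fun hL k _ hk e he hek => LHP.forward hs r hr hL k hk e he hek, LHP.backward hs r hr⟩
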